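/- arXiv:2109.13692 — 4 statements merged into one kernel-verified Lean document; each statement's English description precedes it below -/
import Mathlib

section
/- Let q be a prime power, let r and δ be positive integers with δ ≥ 2, and let C be an [n,k,d]_q linear code with k ≥ 1 that is an (r,δ)-LRC. Then d ≤ n - k + 1 - (⌈k/r⌉ - 1)(δ - 1). -/
namespace LRCPaper

noncomputable section Defs

variable {F : Type} [Field F] [Fintype F] [DecidableEq F]

/-- The punctured code of `C` on the coordinate set `S`: delete all coordinates outside `S`. -/
def punctureCode {ι : Type} [Fintype ι] (C : Submodule F (ι → F)) (S : Finset ι) :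
    Submodule F ({ x // x ∈ S } → F) :=
  C.map (LinearMap.funLeft F F (fun j : { x // x ∈ S } => (j : ι)))

/-- Every nonzero codeword of `C` has Hamming weight at least `δ`
(i.e. the minimum distance of `C` is at least `δ`). -/
def minWtGe {ι : Type} [Fintype ι] (C : Submodule F (ι → F)) (δ : ℕ) : Prop :=
  ∀ c ∈ C, c ≠ 0 → δ ≤ hammingNorm c

/-- The minimum Hamming distance of the linear code `C` is exactly `d`. -/
def minDistIs {ι : Type} [Fintype ι] (C : Submodule F (ι → F)) (d : ℕ) : Prop :=
  (∃ c ∈ C, c ≠ 0 ∧ hammingNorm c = d) ∧ minWtGe C d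

/-- The `i`-th code symbol of `C` has `(r, δ)`-locality. -/
def symbolHasLocality {ι : Type} [Fintype ι] (C : Submodule F (ι → F)) (r δ : ℕ) (i : ι) :
    Prop :=
  ∃ S : Finset ι, i ∈ S ∧ S.card ≤ r + δ - 1 ∧ minWtGe (punctureCode C S) δ

/-- `C` is an `(r, δ)`-locally repairable code. -/
def IsLRC {ι : Type} [Fintype ι] (C : Submodule F (ι → F)) (r δ : ℕ) : Prop :=
  ∀ i : ι, symbolHasLocality C r δ i

/-- The right-hand side `n - k + 1 - (⌈k/r⌉ - 1)(δ - 1)` of the Singleton-type bound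
for `(r, δ)`-LRCs, as an integer. -/
def optBound (n k r δ : ℕ) : ℤ :=
  (n : ℤ) - (k : ℤ) + 1 - (⌈(k : ℚ) / (r : ℚ)⌉ - 1) * ((δ : ℤ) - 1)

/-- `C` is an optimal `(r, δ)`-LRC with parameters `[card ι, k, d]`. -/
def IsOptimalLRC {ι : Type} [Fintype ι] (C : Submodule F (ι → F)) (k d r δ : ℕ) : Prop :=
  IsLRC C r δ ∧ Module.finrank F ↥C = k ∧ minDistIs C d ∧
    (d : ℤ) = optBound (Fintype.card ι) k r δ

/-- `C` is an optimal `(r, δ)`-LRC (its minimum distance meets the Singleton-type bound). -/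
def IsOptimalLRCCode {ι : Type} [Fintype ι] (C : Submodule F (ι → F)) (r δ : ℕ) : Prop :=
  IsLRC C r δ ∧ ∃ d : ℕ, minDistIs C d ∧
    (d : ℤ) = optBound (Fintype.card ι) (Module.finrank F ↥C) r δ

/-- The linear map underlying the matrix-product construction: it sends
`(c_1, …, c_M)` to `(∑_ℓ c_ℓ a_{ℓ,1}, …, ∑_ℓ c_ℓ a_{ℓ,N})`. -/
def mpMap {ι : Type} [Fintype ι] {M N : ℕ} (A : Matrix (Fin M) (Fin N) F) :
    (Fin M → ι → F) →ₗ[F] (Fin N × ι → F) where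
  toFun c := fun p => ∑ ℓ : Fin M, c ℓ p.2 * A ℓ p.1
  map_add' x y := by
    funext p
    simp [add_mul, Finset.sum_add_distrib]
  map_smul' a x := by
    funext p
    simp [Finset.mul_sum, mul_assoc]

/-- The matrix-product code `(C_1, …, C_M) · A`, a linear code of length `N * card ι`
with coordinates indexed by `Fin N × ι`. -/
def matrixProductCode {ι : Type} [Fintype ι] {M N : ℕ}
    (Cs : Fin M → Submodule F (ι → F)) (A : Matrix (Fin M) (Fin N) F) :
    Submodule F (Fin N × ι → F) :=
  (Submodule.pi Set.univ Cs).map (mpMap A)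

/-- The linear code of length `N` generated by the first `i` rows of `A`. -/
def rowSpanCode {M N : ℕ} (A : Matrix (Fin M) (Fin N) F) (i : ℕ) :
    Submodule F (Fin N → F) :=
  Submodule.span F {w : Fin N → F | ∃ ℓ : Fin M, (ℓ : ℕ) < i ∧ w = A ℓ}

/-- `A` is nonsingular by columns (NSC): for every `i ≤ M`, every `i × i` submatrix
formed by choosing `i` columns of the first `i` rows of `A` is nonsingular. -/
def IsNSC {M N : ℕ} (A : Matrix (Fin M) (Fin N) F) : Prop :=
  ∀ (i : ℕ) (hi : i ≤ M) (f : Fin i → Fin N), StrictMono f →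
    (Matrix.of fun a b : Fin i => A (Fin.castLE hi a) (f b)).det ≠ 0

/-- Evaluation map underlying generalized Reed–Solomon codes:
`p ↦ (v_1 p(a_1), …, v_n p(a_n))`. -/
def grsMap {n : ℕ} (a v : Fin n → F) : Polynomial F →ₗ[F] (Fin n → F) where
  toFun p := fun i => v i * Polynomial.eval (a i) p
  map_add' p q := by funext i; simp [mul_add]
  map_smul' c p := by funext i; simp [mul_left_comm]

/-- The generalized Reed–Solomon code `GRS_k(a, v)`. -/
def GRSCode {n : ℕ} (k : ℕ) (a v : Fin n → F) : Submodule F (Fin n → F) :=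
  (Polynomial.degreeLT F k).map (grsMap a v)

/-- The set of indices of nonzero columns of `H`. -/
def colSupport {m n : ℕ} (H : Matrix (Fin m) (Fin n) F) : Finset (Fin n) :=
  Finset.univ.filter fun j => ∃ i, H i j ≠ 0

/-- Entry `(i, j)` (0-based) of the `2(δ-1) × (2m-1)` matrix `Ĥ`, built from the distinct
elements `α 0, …, α (m-1)` and nonzero scalars `lam 0, …, lam (m-1)`. -/
def hatEntry (δ m : ℕ) (α lam : ℕ → F) (i j : ℕ) : F :=
  if i < δ - 1 then (if j < m then lam j * α j ^ i else 0)
  else (if m - 1 ≤ j then lam (2 * m - 2 - j) * α (2 * m - 2 - j) ^ (i - (δ - 1)) else 0)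

/-- Entry `(i, j)` (0-based) of the `v(δ-1) × (vm-1)` block-diagonal matrix
`ℋ = H ⊕ ⋯ ⊕ H ⊕ Ĥ` (`v - 2` diagonal copies of `H` followed by `Ĥ`). -/
def calHEntry (δ m v : ℕ) (α lam : ℕ → F) (i j : ℕ) : F :=
  if i < (v - 2) * (δ - 1) then
    (if j < (v - 2) * m ∧ j / m = i / (δ - 1) then lam (j % m) * α (j % m) ^ (i % (δ - 1))
      else 0)
  else
    (if (v - 2) * m ≤ j then hatEntry δ m α lam (i - (v - 2) * (δ - 1)) (j - (v - 2) * m)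
      else 0)

/-- Entry `(i, j)` (0-based) of the `(v(δ-1)+τ) × (vm-1)` matrix `H̃`, obtained by appending
the row block `(A, …, A, Â)` below `ℋ`. -/
def tildeHEntry (δ m v : ℕ) (α lam : ℕ → F) (i j : ℕ) : F :=
  if i < v * (δ - 1) then calHEntry δ m v α lam i j
  else
    lam (if j < (v - 2) * m then j % m
          else (if j - (v - 2) * m < m then j - (v - 2) * m
                else 2 * m - 2 - (j - (v - 2) * m))) *
      α (if j < (v - 2) * m then j % m
          else (if j - (v - 2) * m < m then j - (v - 2) * m
                else 2 * m - 2 - (j - (v - 2) * m))) ^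
        ((δ - 1) + (i - v * (δ - 1)))

end Defs

/-!
Write `C(T)` for the subcode of words vanishing on `T`. Words of `C(T)` have their support in the
complement of `T`, so the classical Singleton bound applied to `C(T) ≠ 0` gives
`d ≤ n - |T| - dim C(T) + 1`, and the task is to find a `T` with `|T| + dim C(T)` large. Start from
`T = ∅` and repeatedly adjoin a repair set `S` on which `C(T)` does not vanish. Each such step
lowers `dim C(T)` by the dimension of `C(T)` punctured to `S`. The Singleton bound for this
punctured code, whose support has size at most `|S \ T|`, shows that `|T| + dim C(T)` grows by at
least `δ - 1`, while `dim C(T)` drops by at most `|S| - (δ - 1) ≤ r`. Hence `⌈k/r⌉ - 1` steps are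
possible before `C(T)` becomes zero.
-/

section SingletonBound

open Module

/-- The subcode of `C` consisting of the codewords that vanish on `T`. It is the shortening of `C`
at `T`, except that the coordinates in `T` are kept, so that subcodes for different `T` live in
the same space. -/
def vanishingSubcode {R ι : Type*} [Semiring R] (C : Submodule R (ι → R)) (T : Finset ι) :
    Submodule R (ι → R) :=
  C ⊓ Submodule.pi (T : Set ι) fun _ => ⊥

section VanishingSubcode

variable {R ι : Type*} [Semiring R]

lemma mem_vanishingSubcode {C : Submodule R (ι → R)} {T : Finset ι} {c : ι → R} :
    c ∈ vanishingSubcode C T ↔ c ∈ C ∧ ∀ i ∈ T, c i = 0 := by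
  simp [vanishingSubcode]

lemma vanishingSubcode_le (C : Submodule R (ι → R)) (T : Finset ι) : vanishingSubcode C T ≤ C :=
  inf_le_left

lemma vanishingSubcode_empty (C : Submodule R (ι → R)) : vanishingSubcode C ∅ = C := by
  simp [vanishingSubcode]

lemma vanishingSubcode_vanishingSubcode [DecidableEq ι] (C : Submodule R (ι → R))
    (T S : Finset ι) :
    vanishingSubcode (vanishingSubcode C T) S = vanishingSubcode C (T ∪ S) := by
  ext c
  simp only [mem_vanishingSubcode, Finset.mem_union, or_imp, forall_and, and_assoc]

lemma vanishingSubcode_ne_bot_of_lt [Nontrivial R] {C : Submodule R (ι → R)} {T : Finset ι} {m : ℕ}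
    (hT : finrank R C ≤ finrank R (vanishingSubcode C T) + m) (hm : m < finrank R C) :
    vanishingSubcode C T ≠ ⊥ := by
  intro hbot
  rw [hbot, finrank_bot] at hT
  omega

end VanishingSubcode

lemma hammingNorm_le_card_of_forall_notMem {ι : Type*} [Fintype ι] {β : ι → Type*}
    [∀ i, Zero (β i)] [∀ i, DecidableEq (β i)] {x : ∀ i, β i} {U : Finset ι}
    (hU : ∀ i ∉ U, x i = 0) : hammingNorm x ≤ U.card :=
  Finset.card_le_card fun i hi => by_contra fun hiU => (Finset.mem_filter.1 hi).2 (hU i hiU)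

variable {F ι : Type} [Field F] [Fintype ι]

lemma finrank_punctureCode_add_finrank_vanishingSubcode (C : Submodule F (ι → F))
    (S : Finset ι) :
    finrank F (punctureCode C S) + finrank F (vanishingSubcode C S) = finrank F C := by
  let f : (ι → F) →ₗ[F] ({x // x ∈ S} → F) := LinearMap.funLeft F F Subtype.val
  have hker : vanishingSubcode C S = (LinearMap.ker (f.domRestrict C)).map C.subtype := by
    have hf : Submodule.pi (S : Set ι) (fun _ => (⊥ : Submodule F F)) = LinearMap.ker f := by
      ext c
      simp [f, funext_iff, LinearMap.funLeft_apply]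
    rw [vanishingSubcode, hf, LinearMap.ker_domRestrict, Submodule.map_comap_subtype]
  rw [hker, Submodule.finrank_map_subtype_eq, punctureCode, ← LinearMap.range_domRestrict]
  exact (f.domRestrict C).finrank_range_add_finrank_ker

lemma finrank_punctureCode_le_card (C : Submodule F (ι → F)) (S : Finset ι) :
    finrank F (punctureCode C S) ≤ S.card := by
  simpa using (punctureCode C S).finrank_le

variable [DecidableEq F]

lemma minWtGe.mono {C D : Submodule F (ι → F)} {d : ℕ} (hC : minWtGe C d) (hDC : D ≤ C) :
    minWtGe D d :=
  fun c hc => hC c (hDC hc)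

lemma finrank_add_sub_one_le_card_of_minWtGe {C : Submodule F (ι → F)} {U : Finset ι} {d : ℕ}
    (hU : ∀ c ∈ C, ∀ i ∉ U, c i = 0) (hC : C ≠ ⊥) (hd : minWtGe C d) :
    finrank F C + (d - 1) ≤ U.card := by
  classical
  obtain ⟨c, hc, hc0⟩ := Submodule.exists_mem_ne_zero_of_ne_bot hC
  have hdU : d ≤ U.card := (hd c hc hc0).trans (hammingNorm_le_card_of_forall_notMem (hU c hc))
  obtain ⟨W, hWU, hW⟩ := Finset.exists_subset_card_eq (Nat.sub_le U.card (d - 1))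
  have hvanish : vanishingSubcode C W = ⊥ := by
    refine (Submodule.eq_bot_iff _).2 fun v hv => by_contra fun hv0 => ?_
    obtain ⟨hvC, hvW⟩ := mem_vanishingSubcode.1 hv
    have hsupp : hammingNorm v ≤ (U \ W).card :=
      hammingNorm_le_card_of_forall_notMem fun i hi => by
        by_cases hiU : i ∈ U
        · exact hvW i (by simpa [hiU] using hi)
        · exact hU v hvC i hiU
    have hpos := hammingNorm_pos_iff.2 hv0
    have hdv := hd v hvC hv0
    rw [Finset.card_sdiff_of_subset hWU] at hsupp
    omega
  have hrank := finrank_punctureCode_add_finrank_vanishingSubcode C W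
  rw [hvanish, finrank_bot] at hrank
  have hle := finrank_punctureCode_le_card C W
  omega

lemma finrank_vanishingSubcode_add_sub_one_le [DecidableEq ι] {C : Submodule F (ι → F)}
    {S T : Finset ι} {δ : ℕ} (hS : minWtGe (punctureCode C S) δ)
    (hne : punctureCode (vanishingSubcode C T) S ≠ ⊥) :
    finrank F (vanishingSubcode C T) + (δ - 1) ≤
      finrank F (vanishingSubcode C (T ∪ S)) + (S \ T).card := by
  have hrank := finrank_punctureCode_add_finrank_vanishingSubcode (vanishingSubcode C T) S
  rw [vanishingSubcode_vanishingSubcode] at hrank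
  have hbound : finrank F (punctureCode (vanishingSubcode C T) S) + (δ - 1) ≤ (S \ T).card := by
    have hsupp : ∀ c ∈ punctureCode (vanishingSubcode C T) S,
        ∀ j ∉ (S \ T).subtype (· ∈ S), c j = 0 := by
      rintro _ ⟨v, hv, rfl⟩ j hj
      exact (mem_vanishingSubcode.1 hv).2 j (by simpa using hj)
    have hle : punctureCode (vanishingSubcode C T) S ≤ punctureCode C S :=
      Submodule.map_mono (vanishingSubcode_le C T)
    calc finrank F (punctureCode (vanishingSubcode C T) S) + (δ - 1)
        ≤ ((S \ T).subtype (· ∈ S)).card :=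
          finrank_add_sub_one_le_card_of_minWtGe hsupp hne (hS.mono hle)
      _ ≤ (S \ T).card := by
          rw [Finset.card_subtype]
          exact Finset.card_filter_le _ _
  omega

lemma IsLRC.exists_punctureCode_ne_bot {C D : Submodule F (ι → F)} {r δ : ℕ}
    (hC : IsLRC C r δ) (hD : D ≠ ⊥) :
    ∃ S : Finset ι, S.card ≤ r + δ - 1 ∧ minWtGe (punctureCode C S) δ ∧
      punctureCode D S ≠ ⊥ := by
  obtain ⟨c, hc, hc0⟩ := Submodule.exists_mem_ne_zero_of_ne_bot hD
  obtain ⟨i, hi⟩ := Function.ne_iff.1 hc0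
  obtain ⟨S, hiS, hcard, hS⟩ := hC i
  refine ⟨S, hcard, hS, (Submodule.ne_bot_iff _).2 ⟨_, Submodule.mem_map_of_mem hc, ?_⟩⟩
  exact Function.ne_iff.2 ⟨⟨i, hiS⟩, hi⟩

lemma IsLRC.exists_finrank_le_finrank_vanishingSubcode_add {C : Submodule F (ι → F)} {r δ m : ℕ}
    (hC : IsLRC C r δ) (hm : m * r < finrank F C) :
    ∃ T : Finset ι, finrank F C ≤ finrank F (vanishingSubcode C T) + m * r ∧
      finrank F C + m * (δ - 1) ≤ T.card + finrank F (vanishingSubcode C T) := by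
  classical
  induction m with
  | zero => exact ⟨∅, by rw [vanishingSubcode_empty]; simp⟩
  | succ m ih =>
    rw [Nat.succ_mul] at hm
    have hm' : m * r < finrank F C := by omega
    obtain ⟨T, hdim, hsum⟩ := ih hm'
    obtain ⟨S, hcard, hS, hne⟩ :=
      hC.exists_punctureCode_ne_bot (vanishingSubcode_ne_bot_of_lt hdim hm')
    have hstep := finrank_vanishingSubcode_add_sub_one_le hS hne
    have hsdiff : (S \ T).card ≤ S.card := Finset.card_le_card Finset.sdiff_subset
    have hunion : (S \ T).card + T.card = (T ∪ S).card := by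
      rw [Finset.card_sdiff_add_card, Finset.union_comm]
    exact ⟨T ∪ S, by rw [Nat.succ_mul]; omega, by rw [Nat.succ_mul]; omega⟩

lemma IsLRC.add_finrank_add_mul_le_card_add_one {C : Submodule F (ι → F)} {d r δ m : ℕ}
    (hC : IsLRC C r δ) (hd : minWtGe C d) (hm : m * r < finrank F C) :
    d + finrank F C + m * (δ - 1) ≤ Fintype.card ι + 1 := by
  classical
  obtain ⟨T, hdim, hsum⟩ := hC.exists_finrank_le_finrank_vanishingSubcode_add hm
  have hsupp : ∀ c ∈ vanishingSubcode C T, ∀ i ∉ Tᶜ, c i = 0 := fun c hc i hi =>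
    (mem_vanishingSubcode.1 hc).2 i (by simpa using hi)
  have hsingleton := finrank_add_sub_one_le_card_of_minWtGe hsupp
    (vanishingSubcode_ne_bot_of_lt hdim hm) (hd.mono (vanishingSubcode_le C T))
  have hcompl := T.card_add_card_compl
  omega

theorem singleton_type_bound_general {C : Submodule F (ι → F)} {d r δ : ℕ} (hr : 0 < r)
    (hpos : 0 < finrank F C) (hd : minWtGe C d) (hC : IsLRC C r δ) :
    (d : ℤ) ≤ optBound (Fintype.card ι) (finrank F C) r δ := by
  have hceil : 0 < ⌈(finrank F C : ℚ) / r⌉ := Int.ceil_pos.2 (by positivity)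
  obtain ⟨m, hm⟩ := Int.eq_succ_of_zero_lt hceil
  have hmr : m * r < finrank F C := by
    have hlt : (m : ℚ) < finrank F C / r := by
      exact_mod_cast Int.lt_ceil.1 (show (m : ℤ) < ⌈(finrank F C : ℚ) / r⌉ by omega)
    exact_mod_cast (lt_div_iff₀ (by exact_mod_cast hr)).1 hlt
  have hbound : (d : ℤ) + finrank F C + m * (δ - 1 : ℕ) ≤ Fintype.card ι + 1 := by
    exact_mod_cast hC.add_finrank_add_mul_le_card_add_one hd hmr
  have hδ : (m : ℤ) * ((δ : ℤ) - 1) ≤ m * (δ - 1 : ℕ) := by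
    gcongr
    omega
  rw [optBound, hm, add_sub_cancel_right]
  linarith

end SingletonBound

/-- Singleton-type bound for `(r,δ)`-LRCs: if `C` is an `[n,k,d]_q`
`(r,δ)`-LRC with `k ≥ 1`, `r ≥ 1`, `δ ≥ 2`, then
`d ≤ n - k + 1 - (⌈k/r⌉ - 1)(δ - 1)`. -/
theorem singleton_type_bound
    (q : ℕ) (hq : IsPrimePow q)
    (F : Type) [Field F] [Fintype F] [DecidableEq F] (hF : Fintype.card F = q)
    (n k d r δ : ℕ) (hr : 1 ≤ r) (hδ : 2 ≤ δ) (hk : 1 ≤ k)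
    (C : Submodule F (Fin n → F))
    (hdim : Module.finrank F ↥C = k) (hdist : minDistIs C d)
    (hLRC : IsLRC C r δ) :
    (d : ℤ) ≤ optBound n k r δ := by
  subst hdim
  simpa using singleton_type_bound_general hr hk hdist.2 hLRC

end LRCPaper
end

section
/- Let q be a prime power, let C_i be an [n,k_i,d_i]_q linear code for each i ∈ {1,...,M}, and let A be a full-rank M×N matrix over F_q with M ≤ N. Then the matrix-product code (C_1,...,C_M)·A is a linear code of length Nn and dimension k_1 + ... + k_M, and its minimum distance d satisfies d ≥ min_{i∈{1,...,M}} d_i ρ_i, where ρ_i is the minimum distance of the linear code of length N over F_q generated by the first i rows of A. Moreover, if the codes are nested, i.e., C_M ⊆ ⋯ ⊆ C_1, then d = min_{i∈{1,...,M}} d_i ρ_i. -/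
namespace LRCPaper

/-! Read a codeword `mpMap A c` of the matrix-product code as an array whose column at `x : ι` is
`∑ ℓ, c ℓ x • A ℓ`. As the rows of `A` are independent, `mpMap A` is injective, which gives the
dimension. If `i` is the last index with `c i ≠ 0`, every column lies in the code generated by the
rows `A 0, …, A i`, and it is nonzero wherever `c i` is; at least `d i` columns thus have weight at
least `ρ i`.

For nested codes, take `w` of weight `ρ i` in the code generated by `A 0, …, A i`, and `c` of
weight `d i` in `Cs i`. The array `w j * c x` has weight `d i * ρ i`, and it is a codeword because
`c` belongs to all of `Cs 0, …, Cs i`. -/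

open scoped Matrix

section HammingNorm

variable {κ ι α β : Type*} [Fintype κ] [Fintype ι]

lemma hammingNorm_eq_sum_columns [Zero α] [DecidableEq α] (w : κ × ι → α) :
    hammingNorm w = ∑ x, hammingNorm fun j => w (j, x) := by
  simp only [hammingNorm, Finset.card_filter, Fintype.sum_prod_type_right]

lemma hammingNorm_mul_le_of_forall_column [Zero α] [DecidableEq α] [Zero β] [DecidableEq β]
    {c : ι → β} {w : κ × ι → α} {δ : ℕ}
    (h : ∀ x, c x ≠ 0 → δ ≤ hammingNorm fun j => w (j, x)) :
    hammingNorm c * δ ≤ hammingNorm w :=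
  calc hammingNorm c * δ
      ≤ ∑ x with c x ≠ 0, hammingNorm fun j => w (j, x) :=
        Finset.card_nsmul_le_sum _ _ _ fun x hx => h x (Finset.mem_filter.1 hx).2
    _ ≤ ∑ x, hammingNorm fun j => w (j, x) :=
        Finset.sum_le_sum_of_subset (Finset.filter_subset _ _)
    _ = hammingNorm w := (hammingNorm_eq_sum_columns w).symm

lemma hammingNorm_fst_mul_snd [MulZeroClass α] [NoZeroDivisors α] [DecidableEq α]
    (w : κ → α) (c : ι → α) :
    hammingNorm (fun p : κ × ι => w p.1 * c p.2) = hammingNorm w * hammingNorm c := by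
  simp only [hammingNorm, mul_ne_zero_iff]
  rw [← Finset.card_product, ← Finset.filter_product, Finset.univ_product_univ]

end HammingNorm

lemma exists_ne_zero_forall_gt_eq_zero {ι : Type*} {V : ι → Type*} [LT ι] [WellFoundedGT ι]
    [∀ i, Zero (V i)] {c : ∀ i, V i} (hc : c ≠ 0) :
    ∃ i, c i ≠ 0 ∧ ∀ j, i < j → c j = 0 := by
  obtain ⟨i, hi, hmax⟩ :=
    (wellFounded_gt (α := ι)).has_min {i | c i ≠ 0} (Function.ne_iff.1 hc)
  exact ⟨i, hi, fun j hij => by_contra fun hj => hmax j hj hij⟩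

lemma finrank_submodule_pi_univ {ι R : Type*} {V : ι → Type*} [Fintype ι] [Semiring R]
    [StrongRankCondition R] [∀ i, AddCommMonoid (V i)] [∀ i, Module R (V i)]
    (p : ∀ i, Submodule R (V i)) [∀ i, Module.Free R (p i)] [∀ i, Module.Finite R (p i)] :
    Module.finrank R ↥(Submodule.pi Set.univ p) = ∑ i, Module.finrank R ↥(p i) := by
  let e : ↥(Submodule.pi Set.univ p) ≃ₗ[R] ∀ i, ↥(p i) :=
    { toFun c i := ⟨c.1 i, c.2 i (Set.mem_univ i)⟩
      map_add' _ _ := rfl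
      map_smul' _ _ := rfl
      invFun c := ⟨fun i => c i, fun i _ => (c i).2⟩ }
  rw [e.finrank_eq, Module.finrank_pi_fintype]

lemma linearIndependent_row_of_rank_eq_card {m n K : Type*} [Fintype m] [Fintype n] [Field K]
    {A : Matrix m n K} (hA : A.rank = Fintype.card m) : LinearIndependent K A.row := by
  rw [linearIndependent_iff_card_eq_finrank_span, Set.finrank, ← A.rank_eq_finrank_span_row, hA]

section MatrixProduct

variable {F ι : Type} [Field F] [Fintype ι] {M N : ℕ}

lemma mpMap_column (A : Matrix (Fin M) (Fin N) F) (c : Fin M → ι → F) (x : ι) :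
    (fun j => mpMap A c (j, x)) = (fun ℓ => c ℓ x) ᵥ* A :=
  rfl

lemma mpMap_injective {A : Matrix (Fin M) (Fin N) F} (hA : LinearIndependent F A.row) :
    Function.Injective (mpMap (ι := ι) A) := by
  intro c c' h
  have hcol (x : ι) : (fun ℓ => c ℓ x) = fun ℓ => c' ℓ x :=
    Matrix.vecMul_injective_iff.2 hA <| by
      simp only [← mpMap_column, h]
  funext ℓ x
  exact congrFun (hcol x) ℓ

lemma mem_rowSpanCode_iff {A : Matrix (Fin M) (Fin N) F} {i : ℕ} {w : Fin N → F} :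
    w ∈ rowSpanCode A i ↔ ∃ b : Fin M → F, (∀ ℓ : Fin M, i ≤ ℓ → b ℓ = 0) ∧ b ᵥ* A = w := by
  have hrows : {w | ∃ ℓ : Fin M, (ℓ : ℕ) < i ∧ w = A ℓ} = A.row '' {ℓ | (ℓ : ℕ) < i} :=
    Set.ext fun w => exists_congr fun ℓ => and_congr_right fun _ => eq_comm
  rw [rowSpanCode, hrows, Finsupp.mem_span_image_iff_linearCombination,
    (Finsupp.linearEquivFunOnFinite F F (Fin M)).symm.surjective.exists]
  simp only [Finsupp.mem_supported', Set.mem_ofPred_eq, not_lt, Matrix.vecMul_eq_sum,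
    Finsupp.linearCombination_eq_fintype_linearCombination_apply,
    Fintype.linearCombination_apply]
  rfl

lemma finrank_matrixProductCode (Cs : Fin M → Submodule F (ι → F))
    {A : Matrix (Fin M) (Fin N) F} (hA : LinearIndependent F A.row) :
    Module.finrank F ↥(matrixProductCode Cs A) = ∑ i, Module.finrank F ↥(Cs i) := by
  rw [← finrank_submodule_pi_univ]
  exact (Submodule.equivMapOfInjective _ (mpMap_injective hA) _).finrank_eq.symm

lemma fst_mul_snd_mem_matrixProductCode {Cs : Fin M → Submodule F (ι → F)}
    {A : Matrix (Fin M) (Fin N) F} {i : ℕ} {w : Fin N → F} {c : ι → F}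
    (hw : w ∈ rowSpanCode A i) (hc : ∀ ℓ : Fin M, (ℓ : ℕ) < i → c ∈ Cs ℓ) :
    (fun p => w p.1 * c p.2) ∈ matrixProductCode Cs A := by
  obtain ⟨b, hb, rfl⟩ := mem_rowSpanCode_iff.1 hw
  refine ⟨fun ℓ => b ℓ • c, fun ℓ _ => ?_, ?_⟩
  · rcases lt_or_ge (ℓ : ℕ) i with hℓ | hℓ
    · exact (Cs ℓ).smul_mem _ (hc ℓ hℓ)
    · simp only [hb ℓ hℓ, zero_smul, SetLike.mem_coe, zero_mem]
  · funext p
    simp only [mpMap, LinearMap.coe_mk, AddHom.coe_mk, Pi.smul_apply, smul_eq_mul, Matrix.vecMul,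
      dotProduct, Finset.sum_mul, mul_right_comm]

variable [DecidableEq F]

lemma minWtGe_matrixProductCode {Cs : Fin M → Submodule F (ι → F)} {d : Fin M → ℕ}
    (hd : ∀ i, minWtGe (Cs i) (d i)) {A : Matrix (Fin M) (Fin N) F}
    (hA : LinearIndependent F A.row) {ρ : Fin M → ℕ}
    (hρ : ∀ i : Fin M, minWtGe (rowSpanCode A ((i : ℕ) + 1)) (ρ i)) {δ : ℕ}
    (hδ : ∀ i, δ ≤ d i * ρ i) : minWtGe (matrixProductCode Cs A) δ := by
  rintro _ ⟨c, hc, rfl⟩ hw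
  have hc0 : c ≠ 0 := ne_of_apply_ne (mpMap A) (by rwa [map_zero])
  obtain ⟨i, hi, hlast⟩ := exists_ne_zero_forall_gt_eq_zero hc0
  have hcolumn (x : ι) (hx : c i x ≠ 0) : ρ i ≤ hammingNorm fun j => mpMap A c (j, x) := by
    rw [mpMap_column]
    refine hρ i _ (mem_rowSpanCode_iff.2 ⟨_, fun ℓ hℓ => ?_, rfl⟩) fun h0 => hx ?_
    · exact congrFun (hlast ℓ hℓ) x
    · exact congrFun (Matrix.vecMul_injective_iff.2 hA (h0.trans (Matrix.zero_vecMul A).symm)) i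
  calc δ ≤ d i * ρ i := hδ i
    _ ≤ hammingNorm (c i) * ρ i := Nat.mul_le_mul_right _ (hd i _ (hc i (Set.mem_univ i)) hi)
    _ ≤ hammingNorm (mpMap A c) := hammingNorm_mul_le_of_forall_column hcolumn

lemma exists_mem_matrixProductCode_hammingNorm_eq_mul {Cs : Fin M → Submodule F (ι → F)}
    (hCs : Antitone Cs) {A : Matrix (Fin M) (Fin N) F} {i : Fin M} {d ρ : ℕ}
    (hd : minDistIs (Cs i) d) (hρ : minDistIs (rowSpanCode A ((i : ℕ) + 1)) ρ) :
    ∃ v ∈ matrixProductCode Cs A, v ≠ 0 ∧ hammingNorm v = d * ρ := by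
  obtain ⟨⟨c, hc, hc0, rfl⟩, -⟩ := hd
  obtain ⟨⟨w, hw, hw0, rfl⟩, -⟩ := hρ
  have hnorm := (hammingNorm_fst_mul_snd w c).trans (mul_comm _ _)
  have hmem : (fun p => w p.1 * c p.2) ∈ matrixProductCode Cs A :=
    fst_mul_snd_mem_matrixProductCode hw fun ℓ hℓ => hCs (Nat.lt_succ_iff.1 hℓ) hc
  refine ⟨_, hmem, ?_, hnorm⟩
  rw [← hammingNorm_ne_zero_iff, hnorm]
  exact mul_ne_zero (hammingNorm_ne_zero_iff.2 hc0) (hammingNorm_ne_zero_iff.2 hw0)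

theorem matrixProduct_params_general (hM : 0 < M) (Cs : Fin M → Submodule F (ι → F))
    (k d : Fin M → ℕ) (hk : ∀ i, Module.finrank F ↥(Cs i) = k i)
    (hd : ∀ i, minDistIs (Cs i) (d i)) (A : Matrix (Fin M) (Fin N) F) (hA : A.rank = M)
    (ρ : Fin M → ℕ) (hρ : ∀ i : Fin M, minDistIs (rowSpanCode A ((i : ℕ) + 1)) (ρ i)) :
    Module.finrank F ↥(matrixProductCode Cs A) = ∑ i, k i ∧
      (∀ D : ℕ, minDistIs (matrixProductCode Cs A) D →
        Finset.univ.inf' ⟨⟨0, hM⟩, Finset.mem_univ _⟩ (fun i => d i * ρ i) ≤ D) ∧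
      ((∀ i j : Fin M, i ≤ j → Cs j ≤ Cs i) →
        minDistIs (matrixProductCode Cs A)
          (Finset.univ.inf' ⟨⟨0, hM⟩, Finset.mem_univ _⟩ (fun i => d i * ρ i))) := by
  have hrow := linearIndependent_row_of_rank_eq_card (hA.trans (Fintype.card_fin M).symm)
  have hlower : minWtGe (matrixProductCode Cs A)
      (Finset.univ.inf' ⟨⟨0, hM⟩, Finset.mem_univ _⟩ fun i => d i * ρ i) :=
    minWtGe_matrixProductCode (fun i => (hd i).2) hrow (fun i => (hρ i).2)
      fun i => Finset.inf'_le _ (Finset.mem_univ i)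
  refine ⟨?_, ?_, fun hCs => ⟨?_, hlower⟩⟩
  · simp only [finrank_matrixProductCode Cs hrow, hk]
  · rintro D ⟨⟨v, hv, hv0, rfl⟩, -⟩
    exact hlower v hv hv0
  · obtain ⟨i, -, hmin⟩ := Finset.exists_mem_eq_inf' ⟨⟨0, hM⟩, Finset.mem_univ _⟩
      fun i => d i * ρ i
    rw [hmin]
    exact exists_mem_matrixProductCode_hammingNorm_eq_mul hCs (hd i) (hρ i)

end MatrixProduct

/-- parameters of matrix-product codes: if each `C_i` is an
`[n, k_i, d_i]_q` code and `A` is a full-rank `M × N` matrix with `M ≤ N`, then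
`(C_1, …, C_M) · A` has dimension `k_1 + ⋯ + k_M` and minimum distance
`d ≥ min_i d_i ρ_i`, with equality when the codes are nested. -/
theorem matrixProduct_params
    (q : ℕ) (hq : IsPrimePow q)
    (F : Type) [Field F] [Fintype F] [DecidableEq F] (hF : Fintype.card F = q)
    (n M N : ℕ) (hM : 0 < M) (hMN : M ≤ N)
    (Cs : Fin M → Submodule F (Fin n → F)) (k d : Fin M → ℕ)
    (hk : ∀ i, Module.finrank F ↥(Cs i) = k i)
    (hd : ∀ i, minDistIs (Cs i) (d i))
    (A : Matrix (Fin M) (Fin N) F) (hA : A.rank = M)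
    (ρ : Fin M → ℕ)
    (hρ : ∀ i : Fin M, minDistIs (rowSpanCode A ((i : ℕ) + 1)) (ρ i)) :
    Module.finrank F ↥(matrixProductCode Cs A) = ∑ i, k i ∧
      (∀ D : ℕ, minDistIs (matrixProductCode Cs A) D →
        Finset.univ.inf' ⟨⟨0, hM⟩, Finset.mem_univ _⟩ (fun i => d i * ρ i) ≤ D) ∧
      ((∀ i j : Fin M, i ≤ j → Cs j ≤ Cs i) →
        minDistIs (matrixProductCode Cs A)
          (Finset.univ.inf' ⟨⟨0, hM⟩, Finset.mem_univ _⟩ (fun i => d i * ρ i))) := by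
  exact matrixProduct_params_general hM Cs k d hk hd A hA ρ hρ

end LRCPaper
end

section
/- Let q be a prime power, let r, δ be positive integers with δ > 1, and let C_1,...,C_M be linear codes of length n over F_q with C_M ⊆ ⋯ ⊆ C_1. Let A be a full-rank M×N matrix over F_q with M ≤ N and let C = (C_1,...,C_M)·A be the matrix-product code. If C_1 is an (r,δ)-LRC, then C is an (r,δ)-LRC. -/
namespace LRCPaper

/-!
Each block of a codeword of `(C_1, …, C_M) · A` is a linear combination of words of the `C_ℓ`, all
of which lie in `C_1`. Hence a repair set for a coordinate of `C_1`, copied into the `j`-th block,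
is a repair set for the corresponding coordinate of the matrix-product code.
-/

theorem hammingNorm_comp_equiv {ι κ β : Type*} [Fintype ι] [Fintype κ] [Zero β] [DecidableEq β]
    (e : ι ≃ κ) (x : κ → β) : hammingNorm (x ∘ e) = hammingNorm x :=
  Finset.card_equiv e fun i => by simp

section Transport

variable {ι κ : Type} [Fintype ι] [Fintype κ] {F : Type} [Field F]

theorem punctureCode_mono {C D : Submodule F (ι → F)} (h : C ≤ D) (S : Finset ι) :
    punctureCode C S ≤ punctureCode D S :=
  Submodule.map_mono h

theorem map_funLeft_punctureCode_map (C : Submodule F (κ → F)) (f : ι ↪ κ) (S : Finset ι) :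
    (punctureCode C (S.map f)).map (LinearMap.funLeft F F (S.equivMap f)) =
      punctureCode (C.map (LinearMap.funLeft F F f)) S := by
  simp only [punctureCode, ← Submodule.map_comp, ← LinearMap.funLeft_comp]
  rfl

variable [DecidableEq F]

theorem minWtGe.anti {C D : Submodule F (ι → F)} {δ : ℕ} (hD : minWtGe D δ) (h : C ≤ D) :
    minWtGe C δ :=
  fun c hc => hD c (h hc)

theorem minWtGe.of_map_funLeft {C : Submodule F (κ → F)} {δ : ℕ} (e : ι ≃ κ)
    (h : minWtGe (C.map (LinearMap.funLeft F F e)) δ) : minWtGe C δ := by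
  intro c hc hc0
  have he0 : c ∘ e ≠ 0 := fun h0 => hc0 <| e.surjective.injective_comp_right h0
  exact (h (c ∘ e) (Submodule.mem_map_of_mem hc) he0).trans_eq (hammingNorm_comp_equiv e c)

theorem symbolHasLocality.anti {C D : Submodule F (ι → F)} {r δ : ℕ} {i : ι}
    (hD : symbolHasLocality D r δ i) (h : C ≤ D) : symbolHasLocality C r δ i := by
  obtain ⟨S, hiS, hcard, hdist⟩ := hD
  exact ⟨S, hiS, hcard, hdist.anti (punctureCode_mono h S)⟩

theorem symbolHasLocality.of_map_funLeft {C : Submodule F (κ → F)} {r δ : ℕ} {i : ι} (f : ι ↪ κ)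
    (h : symbolHasLocality (C.map (LinearMap.funLeft F F f)) r δ i) :
    symbolHasLocality C r δ (f i) := by
  obtain ⟨S, hiS, hcard, hdist⟩ := h
  rw [← map_funLeft_punctureCode_map] at hdist
  exact ⟨S.map f, Finset.mem_map_of_mem f hiS, (S.card_map f).trans_le hcard,
    hdist.of_map_funLeft (S.equivMap f)⟩

end Transport

section MatrixProduct

variable {F : Type} [Field F] {ι : Type} [Fintype ι] {M N : ℕ}

theorem funLeft_mpMap (A : Matrix (Fin M) (Fin N) F) (c : Fin M → ι → F) (j : Fin N) :
    LinearMap.funLeft F F (Prod.mk j) (mpMap A c) = ∑ ℓ, A ℓ j • c ℓ := by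
  ext x
  simp [LinearMap.funLeft_apply, mpMap, mul_comm]

theorem map_funLeft_matrixProductCode_le (Cs : Fin M → Submodule F (ι → F))
    (A : Matrix (Fin M) (Fin N) F) (j : Fin N) :
    (matrixProductCode Cs A).map (LinearMap.funLeft F F (Prod.mk j)) ≤ ⨆ ℓ, Cs ℓ := by
  rintro _ ⟨_, ⟨c, hc, rfl⟩, rfl⟩
  rw [funLeft_mpMap]
  exact Submodule.sum_smul_mem _ _ fun ℓ _ => Submodule.mem_iSup_of_mem ℓ (hc ℓ (Set.mem_univ ℓ))

theorem matrixProduct_isLRC_general [DecidableEq F] {r δ : ℕ} (Cs : Fin M → Submodule F (ι → F))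
    {C : Submodule F (ι → F)} (hCs : ∀ ℓ, Cs ℓ ≤ C) (A : Matrix (Fin M) (Fin N) F)
    (hC : IsLRC C r δ) : IsLRC (matrixProductCode Cs A) r δ := by
  rintro ⟨j, i⟩
  have hblock : (matrixProductCode Cs A).map (LinearMap.funLeft F F (Prod.mk j)) ≤ C :=
    (map_funLeft_matrixProductCode_le Cs A j).trans (iSup_le hCs)
  exact ((hC i).anti hblock).of_map_funLeft (Function.Embedding.sectR j ι)

end MatrixProduct

/-- Lemma 2: if `C_M ⊆ ⋯ ⊆ C_1`, `A` is a full-rank `M × N` matrix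
with `M ≤ N`, and `C_1` is an `(r,δ)`-LRC, then `(C_1, …, C_M) · A` is an `(r,δ)`-LRC. -/
theorem matrixProduct_isLRC
    (q : ℕ) (hq : IsPrimePow q)
    (F : Type) [Field F] [Fintype F] [DecidableEq F] (hF : Fintype.card F = q)
    (n M N r δ : ℕ) (hr : 0 < r) (hδ : 1 < δ) (hM : 0 < M) (hMN : M ≤ N)
    (Cs : Fin M → Submodule F (Fin n → F))
    (hnested : ∀ i j : Fin M, i ≤ j → Cs j ≤ Cs i)
    (A : Matrix (Fin M) (Fin N) F) (hA : A.rank = M)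
    (hC1 : IsLRC (Cs ⟨0, hM⟩) r δ) :
    IsLRC (matrixProductCode Cs A) r δ :=
  matrixProduct_isLRC_general Cs (fun ℓ => hnested ⟨0, hM⟩ ℓ (Nat.zero_le ℓ)) A hC1

end LRCPaper
end

section
/- Let q be a prime power and let r, δ, M, N be positive integers with δ > 1 and q ≥ N > M > 1. Let C_1 = ⋯ = C_{M-1} be [r+δ-1, r, δ]_q MDS codes, let g be a nonnegative integer with g < r, and let C_M be an [r+δ-1, r-g, δ+g]_q MDS code. Let C = (C_1,...,C_M)·A be the matrix-product code, where A is an M×N NSC matrix over F_q. If C_M ⊆ C_1, 0 ≤ g ≤ δ/(N-M+1), and (N-M)(g-r+1) = ⌊g/r⌋(δ-1), then C is an optimal (r,δ)-LRC with parameters [N(r+δ-1), Mr-g, (N-M+1)(δ+g)]_q. -/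
namespace LRCPaper

/-!
Read a codeword `w` of `(C₁, …, C_M) · A` as an array indexed by `Fin N × ι`. Each row `w (j, ·)` is
a linear combination of words of the `C_ℓ`, so when all of them lie in one code of minimum distance
`δ` the rows are repair groups. Each column `w (·, x)` is the combination of the rows of `A` with
coefficients `c_ℓ x`; if `c_i` is the last nonzero word, the NSC property leaves at most `i`
(counting from `0`) zeros in the column of every `x` in the support of `c_i`. Hence the weight of
`w` is at least `(N - i) * wt c_i`. Multiplying a word of `C_M` of minimum weight by a combination
of the rows of `A` that meets the Singleton bound gives equality. The distance minus the
Singleton-type bound for locally repairable codes is then `(N - M) * (g - r + 1)`, which the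
hypotheses make zero.
-/

section HammingNorm

variable {α β R : Type*} [Fintype α] [Fintype β] [DecidableEq R]

theorem hammingNorm_prod_eq_sum [Zero R] (w : α × β → R) :
    hammingNorm w = ∑ b, hammingNorm fun a => w (a, b) := by
  simp only [hammingNorm, Finset.card_filter, Fintype.sum_prod_type_right]

theorem hammingNorm_prod_mul [MulZeroClass R] [NoZeroDivisors R] (v : α → R) (c : β → R) :
    (hammingNorm fun p : α × β => c p.2 * v p.1) = hammingNorm v * hammingNorm c := by
  simp only [hammingNorm, ← Finset.card_product]
  congr 1
  ext p
  simp [and_comm]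

theorem hammingNorm_comp_le_of_injective [Zero R] {f : α → β} (hf : Function.Injective f)
    (w : β → R) : hammingNorm (w ∘ f) ≤ hammingNorm w :=
  Finset.card_le_card_of_injOn f (fun a ha => by simpa using ha) hf.injOn

end HammingNorm

section LinearAlgebra

theorem exists_last_ne_zero {κ X : Type*} [Finite κ] [Preorder κ] [Zero X] {c : κ → X}
    (hc : c ≠ 0) : ∃ i, c i ≠ 0 ∧ ∀ l, i < l → c l = 0 := by
  obtain ⟨i, hi⟩ := (Set.toFinite {i | c i ≠ 0}).exists_maximal (Function.ne_iff.mp hc)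
  exact ⟨i, hi.prop, fun l hl => not_not.mp (hi.not_prop_of_gt hl)⟩

theorem finrank_submodule_pi {K κ : Type*} {V : κ → Type*} [Fintype κ] [DivisionRing K]
    [∀ i, AddCommGroup (V i)] [∀ i, Module K (V i)] [∀ i, Module.Finite K (V i)]
    (p : ∀ i, Submodule K (V i)) :
    Module.finrank K (Submodule.pi Set.univ p) = ∑ i, Module.finrank K (p i) := by
  rw [← Module.finrank_pi_fintype]
  exact LinearEquiv.finrank_eq
    { toFun := fun c i => ⟨c.1 i, c.2 i (Set.mem_univ i)⟩
      invFun := fun c => ⟨fun i => (c i).1, fun i _ => (c i).2⟩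
      map_add' := fun _ _ => rfl
      map_smul' := fun _ _ => rfl }

theorem vecMul_submatrix_castLE {R κ : Type*} [NonUnitalNonAssocSemiring R] {M n : ℕ}
    (A : Matrix (Fin M) κ R) (hn : n ≤ M) {τ : Type*} (f : τ → κ) {v : Fin M → R}
    (hv : ∀ l : Fin M, n ≤ l → v l = 0) :
    Matrix.vecMul (v ∘ Fin.castLE hn) (A.submatrix (Fin.castLE hn) f) = Matrix.vecMul v A ∘ f := by
  funext b
  refine Fintype.sum_of_injective (Fin.castLE hn) (Fin.castLE_injective hn) _ _ (fun l hl => ?_)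
    fun _ => rfl
  have hnl : n ≤ l := by simpa [Fin.range_castLE] using hl
  rw [hv l hnl, zero_mul]

theorem exists_ne_zero_hammingNorm_vecMul_le {K m n : Type*} [DivisionRing K] [DecidableEq K]
    [Fintype m] [Fintype n] [Nonempty m] (B : Matrix m n K)
    (hmn : Fintype.card m ≤ Fintype.card n) :
    ∃ u ≠ 0, hammingNorm (Matrix.vecMul u B) ≤ Fintype.card n - Fintype.card m + 1 := by
  classical
  have hm : 0 < Fintype.card m := Fintype.card_pos
  obtain ⟨S, -, hS⟩ := Finset.exists_subset_card_eq (s := (Finset.univ : Finset n))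
    (n := Fintype.card m - 1) (by rw [Finset.card_univ]; omega)
  obtain ⟨u, hu, hu0⟩ : ∃ u ∈ (B.submatrix id ((↑) : S → n)).vecMulLinear.ker, u ≠ 0 := by
    refine (Submodule.ne_bot_iff _).mp (LinearMap.ker_ne_bot_of_finrank_lt ?_)
    rw [Module.finrank_fintype_fun_eq_card, Module.finrank_fintype_fun_eq_card, Fintype.card_coe]
    omega
  have hzero : ∀ j ∈ S, Matrix.vecMul u B j = 0 := fun j hj => congrFun hu ⟨j, hj⟩
  refine ⟨u, hu0, ?_⟩
  calc hammingNorm (Matrix.vecMul u B) ≤ Sᶜ.card := by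
        refine Finset.card_le_card fun j hj => Finset.mem_compl.mpr fun hjS => ?_
        exact (Finset.mem_filter.mp hj).2 (hzero j hjS)
    _ = Fintype.card n - Fintype.card m + 1 := by rw [Finset.card_compl, hS]; omega

end LinearAlgebra

section MatrixProduct

variable {F : Type} [Field F] {ι : Type} [Fintype ι] {M N : ℕ} {A : Matrix (Fin M) (Fin N) F}
  {Cs : Fin M → Submodule F (ι → F)}

theorem mpMap_row (A : Matrix (Fin M) (Fin N) F) (c : Fin M → ι → F) (j : Fin N) :
    (fun x => mpMap A c (j, x)) = ∑ l, A l j • c l := by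
  funext x
  simp [mpMap, mul_comm]

theorem mpMap_smul_const (A : Matrix (Fin M) (Fin N) F) (u : Fin M → F) (c : ι → F) :
    mpMap A (fun l => u l • c) = fun p => c p.2 * Matrix.vecMul u A p.1 := by
  funext p
  simp only [mpMap, LinearMap.coe_mk, AddHom.coe_mk, Pi.smul_apply, smul_eq_mul, Matrix.vecMul,
    dotProduct, Finset.mul_sum]
  exact Finset.sum_congr rfl fun l _ => by ring

theorem row_mem_of_mem_matrixProductCode {D : Submodule F (ι → F)} (hD : ∀ l, Cs l ≤ D)
    {w : Fin N × ι → F} (hw : w ∈ matrixProductCode Cs A) (j : Fin N) :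
    (fun x => w (j, x)) ∈ D := by
  obtain ⟨c, hc, rfl⟩ := hw
  rw [mpMap_row]
  exact D.sum_mem fun l _ => D.smul_mem _ (hD l (hc l (Set.mem_univ l)))

theorem isLRC_matrixProductCode [DecidableEq F] {D : Submodule F (ι → F)} {r δ : ℕ}
    (hD : ∀ l, Cs l ≤ D) (hDδ : minWtGe D δ) (hι : Fintype.card ι ≤ r + δ - 1) :
    IsLRC (matrixProductCode Cs A) r δ := by
  rintro ⟨j, x⟩
  let S : Finset (Fin N × ι) := {j} ×ˢ Finset.univ
  let toRow : ι → S := fun y => ⟨(j, y), by simp [S]⟩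
  have htoRow : Function.Injective toRow := fun y z hyz => by simpa [toRow] using hyz
  refine ⟨S, (toRow x).2, by simpa [S] using hι, ?_⟩
  rintro _ ⟨w, hw, rfl⟩ hne
  have hrow : (fun y => w (j, y)) ≠ 0 := by
    contrapose! hne
    ext ⟨⟨i, y⟩, hiy⟩
    obtain rfl : j = i := by simpa [S] using hiy
    exact congrFun hne y
  calc δ ≤ hammingNorm fun y => w (j, y) := hDδ _ (row_mem_of_mem_matrixProductCode hD hw j) hrow
    _ ≤ _ := hammingNorm_comp_le_of_injective htoRow fun p : S => w p

namespace IsNSC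

theorem le_hammingNorm_vecMul [DecidableEq F] (hA : IsNSC A) {v : Fin M → F} {i : Fin M}
    (hi : v i ≠ 0) (hv : ∀ l, i < l → v l = 0) : N - i ≤ hammingNorm (Matrix.vecMul v A) := by
  by_contra! hlt
  have hzeros : (i : ℕ) + 1 ≤ ({j | Matrix.vecMul v A j ≠ 0} : Finset (Fin N))ᶜ.card := by
    rw [Finset.card_compl, Fintype.card_fin]
    unfold hammingNorm at hlt
    omega
  obtain ⟨T, hT, hTcard⟩ := Finset.exists_subset_card_eq hzeros
  have hvanish : Matrix.vecMul v A ∘ T.orderEmbOfFin hTcard = 0 := by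
    funext b
    simpa using hT (T.orderEmbOfFin_mem hTcard b)
  have hrestrict : v ∘ Fin.castLE i.isLt = 0 := by
    refine Matrix.eq_zero_of_vecMul_eq_zero (hA _ i.isLt _ (T.orderEmbOfFin hTcard).strictMono) ?_
    exact (vecMul_submatrix_castLE A i.isLt _ hv).trans hvanish
  exact hi (congrFun hrestrict (Fin.last i))

theorem mul_hammingNorm_le_hammingNorm_mpMap [DecidableEq F] (hA : IsNSC A) {c : Fin M → ι → F}
    {i : Fin M} (hc : ∀ l, i < l → c l = 0) :
    (N - i) * hammingNorm (c i) ≤ hammingNorm (mpMap A c) := by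
  rw [hammingNorm_prod_eq_sum, mul_comm, ← smul_eq_mul]
  calc hammingNorm (c i) • (N - (i : ℕ))
      ≤ ∑ x with c i x ≠ 0, hammingNorm fun j => mpMap A c (j, x) :=
        Finset.card_nsmul_le_sum _ _ _ fun x hx =>
          hA.le_hammingNorm_vecMul (v := fun l => c l x) (Finset.mem_filter.mp hx).2
            fun l hl => congrFun (hc l hl) x
    _ ≤ _ := Finset.sum_le_sum_of_subset (Finset.subset_univ _)

theorem mpMap_injective (hA : IsNSC A) (hMN : M ≤ N) :
    Function.Injective (mpMap (ι := ι) A) := by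
  classical
  rw [injective_iff_map_eq_zero]
  intro c hAc
  by_contra hc
  obtain ⟨i, hi, hlast⟩ := exists_last_ne_zero hc
  have hle := hA.mul_hammingNorm_le_hammingNorm_mpMap hlast
  rw [hAc, hammingNorm_zero] at hle
  have hpos : 0 < (N - i) * hammingNorm (c i) :=
    Nat.mul_pos (by omega) (hammingNorm_pos_iff.mpr hi)
  omega

theorem finrank_matrixProductCode (hA : IsNSC A) (hMN : M ≤ N) :
    Module.finrank F (matrixProductCode Cs A) = ∑ i, Module.finrank F (Cs i) := by
  rw [matrixProductCode, ← finrank_submodule_pi]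
  exact ((Submodule.pi Set.univ Cs).equivMapOfInjective _ (hA.mpMap_injective hMN)).finrank_eq.symm

theorem minWtGe_matrixProductCode [DecidableEq F] (hA : IsNSC A) {d : Fin M → ℕ}
    (hd : ∀ i, minWtGe (Cs i) (d i)) {D : ℕ} (hD : ∀ i : Fin M, D ≤ (N - i) * d i) :
    minWtGe (matrixProductCode Cs A) D := by
  rintro _ ⟨c, hc, rfl⟩ hne
  obtain ⟨i, hi, hlast⟩ := exists_last_ne_zero (c := c) (by rintro rfl; exact hne (map_zero _))
  calc D ≤ (N - i) * d i := hD i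
    _ ≤ (N - i) * hammingNorm (c i) := Nat.mul_le_mul_left _ (hd i _ (hc i (Set.mem_univ i)) hi)
    _ ≤ _ := hA.mul_hammingNorm_le_hammingNorm_mpMap hlast

theorem exists_mem_matrixProductCode_hammingNorm_le [DecidableEq F] (hA : IsNSC A) (hM : 0 < M)
    (hMN : M ≤ N) {c : ι → F} (hc : ∀ l, c ∈ Cs l) (hc0 : c ≠ 0) :
    ∃ w ∈ matrixProductCode Cs A, w ≠ 0 ∧ hammingNorm w ≤ (N - M + 1) * hammingNorm c := by
  have : Nonempty (Fin M) := ⟨⟨0, hM⟩⟩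
  obtain ⟨u, hu0, hu⟩ := exists_ne_zero_hammingNorm_vecMul_le A (by simpa using hMN)
  rw [Fintype.card_fin, Fintype.card_fin] at hu
  refine ⟨mpMap A fun l => u l • c, ⟨_, fun l _ => (Cs l).smul_mem _ (hc l), rfl⟩, ?_, ?_⟩
  · obtain ⟨l, hl⟩ := Function.ne_iff.mp hu0
    refine (map_ne_zero_iff _ (hA.mpMap_injective hMN)).mpr (Function.ne_iff.mpr ⟨l, ?_⟩)
    exact smul_ne_zero hl hc0
  · rw [mpMap_smul_const, hammingNorm_prod_mul]
    exact Nat.mul_le_mul_right _ hu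

theorem minDistIs_matrixProductCode [DecidableEq F] (hA : IsNSC A) (hM : 0 < M) (hMN : M ≤ N)
    {d : Fin M → ℕ} (hd : ∀ i, minWtGe (Cs i) (d i)) {c : ι → F} (hc : ∀ l, c ∈ Cs l) (hc0 : c ≠ 0)
    (hcd : ∀ i : Fin M, (N - M + 1) * hammingNorm c ≤ (N - i) * d i) :
    minDistIs (matrixProductCode Cs A) ((N - M + 1) * hammingNorm c) := by
  have hlower := hA.minWtGe_matrixProductCode hd hcd
  obtain ⟨w, hw, hw0, hupper⟩ := hA.exists_mem_matrixProductCode_hammingNorm_le hM hMN hc hc0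
  exact ⟨⟨w, hw, hw0, hupper.antisymm (hlower w hw hw0)⟩, hlower⟩

end IsNSC

end MatrixProduct

section NestedFamily

variable {F : Type} [Field F] {ι : Type} [Fintype ι] {M N : ℕ} {A : Matrix (Fin M) (Fin N) F}
  {C1 CM : Submodule F (ι → F)}

namespace IsNSC

theorem finrank_matrixProductCode_nested (hA : IsNSC A) (hM : 0 < M) (hMN : M ≤ N) :
    Module.finrank F (matrixProductCode (fun i : Fin M => if (i : ℕ) < M - 1 then C1 else CM) A) =
      (M - 1) * Module.finrank F C1 + Module.finrank F CM := by
  rw [hA.finrank_matrixProductCode hMN]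
  obtain ⟨m, rfl⟩ := Nat.exists_eq_add_one.mpr hM
  simp [apply_ite fun C : Submodule F (ι → F) => Module.finrank F C, Fin.sum_univ_castSucc]

theorem minDistIs_matrixProductCode_nested [DecidableEq F] (hA : IsNSC A) (hM : 0 < M)
    (hMN : M ≤ N) (hsub : CM ≤ C1) {d₁ d : ℕ} (hC1 : minWtGe C1 d₁) (hCM : minDistIs CM d)
    (hd : (N - M + 1) * d ≤ (N - M + 2) * d₁) :
    minDistIs (matrixProductCode (fun i : Fin M => if (i : ℕ) < M - 1 then C1 else CM) A)
      ((N - M + 1) * d) := by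
  obtain ⟨⟨c, hc, hc0, rfl⟩, hCM_wt⟩ := hCM
  refine hA.minDistIs_matrixProductCode hM hMN
    (d := fun i => if (i : ℕ) < M - 1 then d₁ else hammingNorm c) (fun i => ?_) (fun i => ?_) hc0
    fun i => ?_
  · split_ifs <;> assumption
  · split_ifs
    exacts [hsub hc, hc]
  · split_ifs with hi
    · exact hd.trans (Nat.mul_le_mul_right _ (by omega))
    · exact Nat.mul_le_mul_right _ (by omega)

end IsNSC

end NestedFamily

section SingletonTypeBound

theorem ceil_mul_sub_div {M r g : ℕ} (hM : 0 < M) (hgr : g < r) :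
    ⌈((M * r - g : ℕ) : ℚ) / r⌉ = M := by
  have hle : g ≤ M * r := hgr.le.trans (Nat.le_mul_of_pos_left r hM)
  have hgr' : (g : ℚ) < r := by exact_mod_cast hgr
  have hg : (0 : ℚ) ≤ g := g.cast_nonneg
  rw [Int.ceil_eq_iff, lt_div_iff₀ (hg.trans_lt hgr'), div_le_iff₀ (hg.trans_lt hgr'),
    Nat.cast_sub hle]
  push_cast
  constructor <;> linarith

theorem optBound_mul_sub {M r g : ℕ} (hM : 0 < M) (hgr : g < r) (N δ : ℕ) :
    optBound (N * (r + δ - 1)) (M * r - g) r δ =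
      ((N : ℤ) - M + 1) * (δ + g) - ((N : ℤ) - M) * ((g : ℤ) - r + 1) := by
  have hle : g ≤ M * r := hgr.le.trans (Nat.le_mul_of_pos_left r hM)
  rw [optBound, ceil_mul_sub_div hM hgr, Nat.cast_sub hle, Nat.cast_mul, Nat.cast_sub (by omega)]
  push_cast
  ring

theorem mul_add_le_of_le_div {M N g δ : ℕ} (hMN : M ≤ N)
    (hgδ : (g : ℚ) ≤ (δ : ℚ) / ((N : ℚ) - (M : ℚ) + 1)) :
    (N - M + 1) * (δ + g) ≤ (N - M + 2) * δ := by
  obtain ⟨k, rfl⟩ := Nat.exists_eq_add_of_le hMN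
  have hk : g * (k + 1) ≤ δ := by
    rw [Nat.cast_add, add_sub_cancel_left, le_div_iff₀ (by positivity)] at hgδ
    exact_mod_cast hgδ
  rw [Nat.add_sub_cancel_left]
  linarith

end SingletonTypeBound

theorem matrixProduct_optimal_of_conditions_general {F : Type} [Field F] [DecidableEq F]
    {ι : Type} [Fintype ι] {r δ M N g : ℕ} (hι : Fintype.card ι = r + δ - 1)
    (hM : 0 < M) (hMN : M ≤ N) (hgr : g < r) {C1 CM : Submodule F (ι → F)}
    (hC1k : Module.finrank F C1 = r) (hC1d : minWtGe C1 δ)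
    (hCMk : Module.finrank F CM = r - g) (hCMd : minDistIs CM (δ + g))
    {A : Matrix (Fin M) (Fin N) F} (hA : IsNSC A) (hsub : CM ≤ C1)
    (hgδ : (g : ℚ) ≤ (δ : ℚ) / ((N : ℚ) - (M : ℚ) + 1))
    (heq : ((N : ℤ) - (M : ℤ)) * ((g : ℤ) - (r : ℤ) + 1)
        = ((g / r : ℕ) : ℤ) * ((δ : ℤ) - 1)) :
    IsOptimalLRC (matrixProductCode (fun i : Fin M => if (i : ℕ) < M - 1 then C1 else CM) A)
      (M * r - g) ((N - M + 1) * (δ + g)) r δ := by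
  refine ⟨isLRC_matrixProductCode (D := C1) (fun l => ?_) hC1d hι.le, ?_,
    hA.minDistIs_matrixProductCode_nested hM hMN hsub hC1d hCMd (mul_add_le_of_le_div hMN hgδ), ?_⟩
  · split_ifs
    exacts [le_rfl, hsub]
  · rw [hA.finrank_matrixProductCode_nested hM hMN, hC1k, hCMk, ← Nat.add_sub_assoc hgr.le,
      ← Nat.succ_mul, Nat.succ_eq_add_one, Nat.sub_add_cancel hM]
  · have hdefect : ((N : ℤ) - M) * ((g : ℤ) - r + 1) = 0 := by
      rw [heq, Nat.div_eq_of_lt hgr, Nat.cast_zero, zero_mul]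
    rw [Fintype.card_prod, Fintype.card_fin, hι, optBound_mul_sub hM hgr, hdefect]
    push_cast [Nat.cast_sub hMN]
    ring

/-- Lemma `lemd`: the matrix-product code of the nested MDS codes
`C_1 = ⋯ = C_{M-1}` (parameters `[r+δ-1, r, δ]_q`) and `C_M` (parameters
`[r+δ-1, r-g, δ+g]_q`) by an `M × N` NSC matrix is an optimal `(r,δ)`-LRC with
parameters `[N(r+δ-1), Mr-g, (N-M+1)(δ+g)]_q`, provided `C_M ⊆ C_1`,
`0 ≤ g ≤ δ/(N-M+1)` and `(N-M)(g-r+1) = ⌊g/r⌋(δ-1)`. -/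
theorem matrixProduct_optimal_of_conditions
    (q : ℕ) (hq : IsPrimePow q)
    (F : Type) [Field F] [Fintype F] [DecidableEq F] (hF : Fintype.card F = q)
    (r δ M N g : ℕ) (hδ : 1 < δ) (hr : 0 < r) (hM : 1 < M) (hMN : M < N) (hNq : N ≤ q)
    (hgr : g < r)
    (C1 CM : Submodule F (Fin (r + δ - 1) → F))
    (hC1k : Module.finrank F ↥C1 = r) (hC1d : minDistIs C1 δ)
    (hCMk : Module.finrank F ↥CM = r - g) (hCMd : minDistIs CM (δ + g))
    (A : Matrix (Fin M) (Fin N) F) (hA : IsNSC A)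
    (hsub : CM ≤ C1)
    (hgδ : (g : ℚ) ≤ (δ : ℚ) / ((N : ℚ) - (M : ℚ) + 1))
    (heq : ((N : ℤ) - (M : ℤ)) * ((g : ℤ) - (r : ℤ) + 1)
        = ((g / r : ℕ) : ℤ) * ((δ : ℤ) - 1)) :
    IsOptimalLRC
      (matrixProductCode (fun i : Fin M => if (i : ℕ) < M - 1 then C1 else CM) A)
      (M * r - g) ((N - M + 1) * (δ + g)) r δ :=
  matrixProduct_optimal_of_conditions_general (Fintype.card_fin _) (by omega) hMN.le hgr
    hC1k hC1d.2 hCMk hCMd hA hsub hgδ heq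

end LRCPaper
end
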